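/- arXiv:1501.02618 — 6 statements merged into one kernel-verified Lean document; each statement's English description precedes it below -/
import Mathlib

section
/- There exist constants 0 < c ≤ C such that for every z ≥ 1, c·e^{z}/√z ≤ I₀(z) ≤ C·e^{z}/√z. Consequently, there exist constants 0 < c' ≤ C' such that for all t, x, y > 0 with xy ≥ t, c'·(xyt)^{−1/2}·exp(−(x−y)²/(2t)) ≤ p(t,x,y) ≤ C'·(xyt)^{−1/2}·exp(−(x−y)²/(2t)). -/
open Real MeasureTheory

/-- Modified Bessel function of the first kind, order 0. -/
noncomputable def I0 (z : ℝ) : ℝ := ∑' n : ℕ, (z/2)^(2*n) / ((n.factorial : ℝ))^2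

/-- Modified Bessel function of the first kind, order 1. -/
noncomputable def I1 (z : ℝ) : ℝ :=
  ∑' n : ℕ, (z/2)^(2*n+1) / ((n.factorial : ℝ) * ((n+1).factorial : ℝ))

/-- Heat kernel of the Bessel operator `d²/dx² + (1/x) d/dx` on `(0,∞)`
with respect to the measure `y dy`. -/
noncomputable def pk (t x y : ℝ) : ℝ :=
  t⁻¹ * Real.exp (-(x^2 + y^2)/(2*t)) * I0 (x*y/t)

/-- The function `h` from (AC): Dirichlet heat kernel of `(1/2) d²/dx²` on `(1,∞)`
multiplied by `(xy)⁻¹`. -/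
noncomputable def hker (t x y : ℝ) : ℝ :=
  (2*Real.pi*t)^(-(1:ℝ)/2) * (x*y)⁻¹ *
    (Real.exp (-(x-y)^2/(2*t)) - Real.exp (-(x+y-2)^2/(2*t)))

/-! Writing `z ^ (2 * n) / (2 ^ n * n!) ^ 2` as `z ^ (2 * n) / (2 * n)!` times
`Nat.centralBinom n / 4 ^ n` exhibits `I0 z` as a weighted version of the series of `cosh z`. By
Wallis' product the extra weight lies between `(π / 2 * (2 * n + 1)) ^ (-1 / 2)` and
`(2 * n + 1) ^ (-1 / 2)`. The weights of `cosh z` concentrate around `2 * n = z`, so `s ^ (-1 / 2)`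
may be replaced by its tangent line at a multiple of `z + 1` (from below, by convexity) or by an
AM-GM bound (from above), and the resulting series are controlled by `cosh z` and `sinh z`. -/

lemma inv_sqrt_le_inv_sqrt_mul {a s : ℝ} (ha : 0 < a) (hs : 0 < s) :
    (√s)⁻¹ ≤ (√a)⁻¹ * ((1 + a / s) / 2) := by
  obtain ⟨w, hw, rfl⟩ : ∃ w, 0 < w ∧ a = w ^ 2 := ⟨√a, sqrt_pos.2 ha, (sq_sqrt ha.le).symm⟩
  obtain ⟨v, hv, rfl⟩ : ∃ v, 0 < v ∧ s = v ^ 2 := ⟨√s, sqrt_pos.2 hs, (sq_sqrt hs.le).symm⟩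
  rw [sqrt_sq hw.le, sqrt_sq hv.le, ← sub_nonneg]
  calc 0 ≤ (w - v) ^ 2 / (2 * w * v ^ 2) := by positivity
    _ = w⁻¹ * ((1 + w ^ 2 / v ^ 2) / 2) - v⁻¹ := by field_simp; ring

lemma inv_sqrt_mul_le_inv_sqrt {a s : ℝ} (ha : 0 < a) (hs : 0 < s) :
    (√a)⁻¹ * ((3 - s / a) / 2) ≤ (√s)⁻¹ := by
  obtain ⟨w, hw, rfl⟩ : ∃ w, 0 < w ∧ a = w ^ 2 := ⟨√a, sqrt_pos.2 ha, (sq_sqrt ha.le).symm⟩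
  obtain ⟨v, hv, rfl⟩ : ∃ v, 0 < v ∧ s = v ^ 2 := ⟨√s, sqrt_pos.2 hs, (sq_sqrt hs.le).symm⟩
  rw [sqrt_sq hw.le, sqrt_sq hv.le, ← sub_nonneg]
  calc 0 ≤ (w - v) ^ 2 * (2 * w + v) / (2 * w ^ 3 * v) := by positivity
    _ = v⁻¹ - w⁻¹ * ((3 - v ^ 2 / w ^ 2) / 2) := by field_simp; ring

lemma one_le_wallis_W (n : ℕ) : 1 ≤ Wallis.W n := by
  refine Finset.one_le_prod fun i _ => ?_
  rw [div_mul_div_comm, one_le_div (by positivity)]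
  nlinarith

lemma centralBinom_eq_factorial_div (n : ℕ) :
    (n.centralBinom : ℝ) = (2 * n).factorial / (n.factorial : ℝ) ^ 2 := by
  rw [Nat.centralBinom_eq_two_mul_choose, Nat.cast_choose ℝ (by lia : n ≤ 2 * n),
    show 2 * n - n = n by lia, sq]

lemma centralBinom_div_four_pow_eq_inv_sqrt (n : ℕ) :
    (n.centralBinom : ℝ) / 4 ^ n = (√(Wallis.W n * (2 * n + 1)))⁻¹ := by
  have hW : Wallis.W n * (2 * n + 1) = ((n.centralBinom : ℝ) / 4 ^ n)⁻¹ ^ 2 := by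
    rw [Wallis.W_eq_factorial_ratio, centralBinom_eq_factorial_div,
      show (4 : ℝ) ^ n = 2 ^ (2 * n) by rw [pow_mul]; norm_num]
    field_simp
    ring
  rw [hW, sqrt_sq (by positivity), inv_inv]

lemma centralBinom_div_four_pow_le (n : ℕ) :
    (n.centralBinom : ℝ) / 4 ^ n ≤ (√(2 * n + 1))⁻¹ := by
  rw [centralBinom_div_four_pow_eq_inv_sqrt]
  gcongr
  exact le_mul_of_one_le_left (by positivity) (one_le_wallis_W n)

lemma le_centralBinom_div_four_pow (n : ℕ) :
    (√(π / 2 * (2 * n + 1)))⁻¹ ≤ (n.centralBinom : ℝ) / 4 ^ n := by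
  have := Wallis.W_pos n
  rw [centralBinom_div_four_pow_eq_inv_sqrt]
  gcongr
  exact Wallis.W_le n

lemma hasSum_I0 (z : ℝ) :
    HasSum (fun n : ℕ => z ^ (2 * n) / (2 * n).factorial * (n.centralBinom / 4 ^ n)) (I0 z) := by
  have hterm (n : ℕ) : (z / 2) ^ (2 * n) / (n.factorial : ℝ) ^ 2 =
      z ^ (2 * n) / (2 * n).factorial * (n.centralBinom / 4 ^ n) := by
    rw [centralBinom_eq_factorial_div, div_pow, pow_mul 2 2 n,
      show (2 : ℝ) ^ 2 = 4 by norm_num]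
    field_simp
  have hcosh_nonneg (n : ℕ) : 0 ≤ z ^ (2 * n) / (2 * n).factorial := by
    rw [pow_mul]; positivity
  have hcoeff_le_one (n : ℕ) : (n.centralBinom : ℝ) / 4 ^ n ≤ 1 :=
    (centralBinom_div_four_pow_le n).trans <| inv_le_one_of_one_le₀ <| one_le_sqrt.2 <| by simp
  have hsummable : Summable fun n : ℕ =>
      z ^ (2 * n) / (2 * n).factorial * ((n.centralBinom : ℝ) / 4 ^ n) :=
    (hasSum_cosh z).summable.of_nonneg_of_le
      (fun n => mul_nonneg (hcosh_nonneg n) (by positivity))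
      fun n => mul_le_of_le_one_right (hcosh_nonneg n) (hcoeff_le_one n)
  rw [I0, tsum_congr hterm]
  exact hsummable.hasSum

lemma hasSum_cosh_mul_two_mul_add_one (z : ℝ) :
    HasSum (fun n : ℕ => z ^ (2 * n) / (2 * n).factorial * (2 * n + 1))
      (cosh z + z * sinh z) := by
  have hshift (n : ℕ) : z * (z ^ (2 * n + 1) / (2 * n + 1).factorial) =
      z ^ (2 * (n + 1)) / (2 * (n + 1)).factorial * (2 * (n + 1 : ℕ)) := by
    rw [show 2 * (n + 1) = 2 * n + 1 + 1 by ring, Nat.factorial_succ (2 * n + 1)]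
    push_cast
    field_simp
    ring
  have hderiv : HasSum (fun n : ℕ => z ^ (2 * n) / (2 * n).factorial * (2 * n)) (z * sinh z) := by
    rw [← hasSum_nat_add_iff' 1]
    simpa only [← hshift, Finset.sum_range_one, Nat.cast_zero, mul_zero, sub_zero]
      using (hasSum_sinh z).mul_left z
  simpa only [mul_add_one, add_comm (cosh z)] using hderiv.add (hasSum_cosh z)

lemma exp_div_sqrt_le_I0 {z : ℝ} (hz : 0 ≤ z) : exp z / √(2 * π * (z + 1)) ≤ I0 z := by
  set a := π / 2 * (z + 1) with ha_def
  have ha : 0 < a := by positivity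
  have htangent : HasSum (fun n : ℕ => z ^ (2 * n) / (2 * n).factorial *
        ((√a)⁻¹ * ((3 - π / 2 * (2 * n + 1) / a) / 2)))
      ((√a)⁻¹ * ((3 * cosh z - (cosh z + z * sinh z) / (z + 1)) / 2)) := by
    convert! ((((hasSum_cosh z).mul_left 3).sub
      ((hasSum_cosh_mul_two_mul_add_one z).div_const (z + 1))).div_const 2).mul_left (√a)⁻¹ using 2
      with n
    rw [ha_def, mul_div_mul_left _ _ (by positivity : π / 2 ≠ 0)]
    ring
  have hcosh : exp z / 2 ≤ cosh z := by
    rw [cosh_eq]; linarith [exp_pos (-z)]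
  have hmean : (cosh z + z * sinh z) / (z + 1) ≤ cosh z := by
    rw [div_le_iff₀ (by positivity)]
    nlinarith [sinh_lt_cosh z]
  have hsqrt : √(2 * π * (z + 1)) = 2 * √a := by
    rw [show 2 * π * (z + 1) = 2 ^ 2 * a by ring, sqrt_mul (by positivity), sqrt_sq zero_le_two]
  calc exp z / √(2 * π * (z + 1)) = (√a)⁻¹ * (exp z / 2) := by rw [hsqrt]; field_simp
    _ ≤ (√a)⁻¹ * ((3 * cosh z - (cosh z + z * sinh z) / (z + 1)) / 2) := by gcongr; linarith
    _ ≤ I0 z := hasSum_le (fun n => by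
        gcongr
        exact (inv_sqrt_mul_le_inv_sqrt ha (by positivity)).trans (le_centralBinom_div_four_pow n))
        htangent (hasSum_I0 z)

lemma I0_le_exp_div_sqrt {z : ℝ} (hz : 0 ≤ z) : I0 z ≤ exp z / √(z + 1) := by
  have hterm (n : ℕ) : z ^ (2 * n) / (2 * n).factorial * (n.centralBinom / 4 ^ n) ≤
      (√(z + 1))⁻¹ * ((2 * (z ^ (2 * n) / (2 * n).factorial) +
        z ^ (2 * n + 1) / (2 * n + 1).factorial) / 2) := by
    have hs : (0 : ℝ) < 2 * n + 1 := by positivity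
    calc _ ≤ z ^ (2 * n) / (2 * n).factorial *
          ((√(z + 1))⁻¹ * ((1 + (z + 1) / (2 * n + 1)) / 2)) := by
          gcongr
          exact (centralBinom_div_four_pow_le n).trans
            (inv_sqrt_le_inv_sqrt_mul (by positivity) hs)
      _ = (√(z + 1))⁻¹ * ((z ^ (2 * n) / (2 * n).factorial * (1 + 1 / (2 * n + 1)) +
          z ^ (2 * n + 1) / (2 * n + 1).factorial) / 2) := by
          rw [Nat.factorial_succ]
          push_cast
          field_simp
          ring
      _ ≤ _ := by
          have : 1 / (2 * (n : ℝ) + 1) ≤ 1 := (div_le_one hs).2 (by simp)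
          rw [mul_comm 2 (_ / _)]
          gcongr
          linarith
  have hcosh : cosh z ≤ exp z := by
    rw [← cosh_add_sinh]; linarith [sinh_nonneg_iff.2 hz]
  calc I0 z ≤ (√(z + 1))⁻¹ * ((2 * cosh z + sinh z) / 2) :=
        hasSum_le hterm (hasSum_I0 z)
          (((((hasSum_cosh z).mul_left 2).add (hasSum_sinh z)).div_const 2).mul_left _)
    _ ≤ (√(z + 1))⁻¹ * exp z := by gcongr; linarith [cosh_add_sinh z]
    _ = exp z / √(z + 1) := inv_mul_eq_div _ _

lemma exp_div_sqrt_eq_mul {t : ℝ} (ht : 0 < t) (x y k : ℝ) :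
    exp (-(x - y) ^ 2 / (2 * t)) / √(k * (x * y * t + t ^ 2)) =
      t⁻¹ * exp (-(x ^ 2 + y ^ 2) / (2 * t)) * (exp (x * y / t) / √(k * (x * y / t + 1))) := by
  have hexp : exp (-(x - y) ^ 2 / (2 * t)) =
      exp (-(x ^ 2 + y ^ 2) / (2 * t)) * exp (x * y / t) := by
    rw [← exp_add]; congr 1; field_simp; ring
  have hsqrt : √(k * (x * y * t + t ^ 2)) = t * √(k * (x * y / t + 1)) := by
    rw [show k * (x * y * t + t ^ 2) = t ^ 2 * (k * (x * y / t + 1)) by field_simp,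
      sqrt_mul (sq_nonneg t), sqrt_sq ht.le]
  rw [hexp, hsqrt]
  ring

lemma exp_div_sqrt_le_pk {t x y : ℝ} (ht : 0 < t) (hxy : 0 ≤ x * y) :
    exp (-(x - y) ^ 2 / (2 * t)) / √(2 * π * (x * y * t + t ^ 2)) ≤ pk t x y := by
  rw [exp_div_sqrt_eq_mul ht, pk]
  gcongr
  exact exp_div_sqrt_le_I0 (by positivity)

lemma pk_le_exp_div_sqrt {t x y : ℝ} (ht : 0 < t) (hxy : 0 ≤ x * y) :
    pk t x y ≤ exp (-(x - y) ^ 2 / (2 * t)) / √(x * y * t + t ^ 2) := by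
  rw [← one_mul (x * y * t + t ^ 2), exp_div_sqrt_eq_mul ht, one_mul, pk]
  gcongr
  exact I0_le_exp_div_sqrt (by positivity)

theorem besselI0_asymptotics_and_kernel_bounds_general :
    (∀ z : ℝ, 0 ≤ z →
      exp z / √(2 * π * (z + 1)) ≤ I0 z ∧ I0 z ≤ exp z / √(z + 1)) ∧
    (∀ t x y : ℝ, 0 < t → 0 ≤ x * y →
      exp (-(x - y) ^ 2 / (2 * t)) / √(2 * π * (x * y * t + t ^ 2)) ≤ pk t x y ∧
      pk t x y ≤ exp (-(x - y) ^ 2 / (2 * t)) / √(x * y * t + t ^ 2)) :=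
  ⟨fun _ hz => ⟨exp_div_sqrt_le_I0 hz, I0_le_exp_div_sqrt hz⟩,
    fun _ _ _ ht hxy => ⟨exp_div_sqrt_le_pk ht hxy, pk_le_exp_div_sqrt ht hxy⟩⟩

lemma inv_sqrt_four_mul_pi_le_one : (√(4 * π))⁻¹ ≤ 1 :=
  inv_le_one_of_one_le₀ (one_le_sqrt.2 (by linarith [pi_gt_three]))

lemma bounds_div_sqrt_of_bounds_div_sqrt_add {E s u p : ℝ} (hE : 0 ≤ E) (hu : 0 < u) (hus : u ≤ s)
    (hp : E / √(2 * π * (s + u)) ≤ p ∧ p ≤ E / √(s + u)) :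
    (√(4 * π))⁻¹ * (E / √s) ≤ p ∧ p ≤ 1 * (E / √s) := by
  have hs : 0 < s := hu.trans_le hus
  have hdouble : 2 * π * (s + u) ≤ 4 * π * s := by nlinarith [pi_pos]
  constructor
  · calc (√(4 * π))⁻¹ * (E / √s) = E / √(4 * π * s) := by
          rw [sqrt_mul (by positivity : 0 ≤ 4 * π)]; field_simp
      _ ≤ E / √(2 * π * (s + u)) := by gcongr E / √?_
      _ ≤ p := hp.1
  · calc p ≤ E / √(s + u) := hp.2
      _ ≤ E / √s := by gcongr; linarith
      _ = 1 * (E / √s) := (one_mul _).symm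

theorem besselI0_asymptotics_and_kernel_bounds :
    (∃ c C : ℝ, 0 < c ∧ c ≤ C ∧ ∀ z : ℝ, 1 ≤ z →
      c * (Real.exp z / Real.sqrt z) ≤ I0 z ∧ I0 z ≤ C * (Real.exp z / Real.sqrt z)) ∧
    (∃ c' C' : ℝ, 0 < c' ∧ c' ≤ C' ∧ ∀ t x y : ℝ, 0 < t → 0 < x → 0 < y → t ≤ x*y →
      c' * ((Real.sqrt (x*y*t))⁻¹ * Real.exp (-(x-y)^2/(2*t))) ≤ pk t x y ∧
      pk t x y ≤ C' * ((Real.sqrt (x*y*t))⁻¹ * Real.exp (-(x-y)^2/(2*t)))) := by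
  obtain ⟨hI, hp⟩ := besselI0_asymptotics_and_kernel_bounds_general
  have hc : 0 < (√(4 * π))⁻¹ := by positivity
  simp_rw [inv_mul_eq_div]
  exact ⟨⟨_, 1, hc, inv_sqrt_four_mul_pi_le_one, fun z hz =>
      bounds_div_sqrt_of_bounds_div_sqrt_add (exp_nonneg _) one_pos hz (hI z (by linarith))⟩,
    ⟨_, 1, hc, inv_sqrt_four_mul_pi_le_one, fun t x y ht hx hy hxy =>
      bounds_div_sqrt_of_bounds_div_sqrt_add (exp_nonneg _) (pow_pos ht 2)
        (by nlinarith : t ^ 2 ≤ x * y * t) (hp t x y ht (by positivity))⟩⟩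
end

section
/- There exist constants 0 < c ≤ C such that for all x, y > 1 and t > 0, c·min(1, (x−1)(y−1)/t)·exp(−(x−y)²/(2t)) ≤ exp(−(x−y)²/(2t)) − exp(−(x+y−2)²/(2t)) ≤ C·min(1, (x−1)(y−1)/t)·exp(−(x−y)²/(2t)). Equivalently, the Dirichlet heat kernel of (1/2)·d²/dx² on the half-line (1,∞), namely g(t,x,y) = (2πt)^{−1/2}·(exp(−(x−y)²/(2t)) − exp(−(x+y−2)²/(2t))), satisfies g(t,x,y) ≍ min(1, (x−1)(y−1)/t)·t^{−1/2}·exp(−(x−y)²/(2t)) with absolute constants. -/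
open Real MeasureTheory

/-!
With `u = (x - a) * (y - a) / t`, the identity `(x + y - 2a)² = (x - y)² + 4(x - a)(y - a)` factors
the difference as `(1 - exp (-2u)) * exp (-(x - y)² / (2t))`, and `1 - exp (-2u)` is comparable to
`min 1 u`.
-/

theorem one_sub_exp_neg_le_min_one (v : ℝ) : 1 - exp (-v) ≤ min 1 v :=
  le_min (sub_le_self 1 (exp_pos _).le) (sub_le_comm.mp (one_sub_le_exp_neg v))

theorem half_mul_min_one_le_one_sub_exp_neg {v : ℝ} (hv : 0 ≤ v) :
    1 / 2 * min 1 v ≤ 1 - exp (-v) := by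
  have exp_neg_le_inv : exp (-v) ≤ (1 + v)⁻¹ := by
    rw [exp_neg, add_comm]
    exact inv_anti₀ (by positivity) (add_one_le_exp v)
  have min_mul_le : min 1 v * (1 + v) ≤ 2 * v := by
    rcases le_total 1 v with h | h
    · rw [min_eq_left h]
      linarith
    · rw [min_eq_right h]
      nlinarith
  calc 1 / 2 * min 1 v ≤ v / (1 + v) := by
        rw [le_div_iff₀ (by positivity)]
        linarith
    _ = 1 - (1 + v)⁻¹ := by
        field_simp
        ring
    _ ≤ 1 - exp (-v) := sub_le_sub_left exp_neg_le_inv 1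

theorem gaussian_sub_gaussian_reflection {t : ℝ} (ht : t ≠ 0) (a x y : ℝ) :
    exp (-(x - y) ^ 2 / (2 * t)) - exp (-(x + y - 2 * a) ^ 2 / (2 * t)) =
      (1 - exp (-(2 * ((x - a) * (y - a) / t)))) * exp (-(x - y) ^ 2 / (2 * t)) := by
  have exponent_eq : -(x + y - 2 * a) ^ 2 / (2 * t) =
      -(2 * ((x - a) * (y - a) / t)) + -(x - y) ^ 2 / (2 * t) := by
    field_simp
    ring
  rw [exponent_eq, exp_add, one_sub_mul]

theorem halfline_gaussian_difference_estimate_general :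
    ∃ c C : ℝ, 0 < c ∧ c ≤ C ∧ ∀ a x y t : ℝ, 0 < t →
      (0 ≤ (x - a) * (y - a) →
        c * (min 1 ((x - a) * (y - a) / t) * exp (-(x - y) ^ 2 / (2 * t))) ≤
          exp (-(x - y) ^ 2 / (2 * t)) - exp (-(x + y - 2 * a) ^ 2 / (2 * t))) ∧
      exp (-(x - y) ^ 2 / (2 * t)) - exp (-(x + y - 2 * a) ^ 2 / (2 * t)) ≤
        C * (min 1 ((x - a) * (y - a) / t) * exp (-(x - y) ^ 2 / (2 * t))) := by
  refine ⟨1 / 2, 2, by norm_num, by norm_num, fun a x y t ht => ?_⟩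
  rw [gaussian_sub_gaussian_reflection ht.ne']
  simp only [← mul_assoc _ (min _ _)]
  refine ⟨fun same_side => ?_, ?_⟩ <;> gcongr
  · have hu : 0 ≤ (x - a) * (y - a) / t := div_nonneg same_side ht.le
    calc 1 / 2 * min 1 ((x - a) * (y - a) / t)
        ≤ 1 / 2 * min 1 (2 * ((x - a) * (y - a) / t)) := by
          gcongr
          linarith
      _ ≤ 1 - exp (-(2 * ((x - a) * (y - a) / t))) :=
          half_mul_min_one_le_one_sub_exp_neg (by positivity)
  · calc 1 - exp (-(2 * ((x - a) * (y - a) / t)))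
        ≤ min 1 (2 * ((x - a) * (y - a) / t)) := one_sub_exp_neg_le_min_one _
      _ ≤ min (2 * 1) (2 * ((x - a) * (y - a) / t)) := min_le_min_right _ (by norm_num)
      _ = 2 * min 1 ((x - a) * (y - a) / t) := (mul_min_of_nonneg _ _ zero_le_two).symm

theorem halfline_gaussian_difference_estimate :
    ∃ c C : ℝ, 0 < c ∧ c ≤ C ∧ ∀ x y t : ℝ, 1 < x → 1 < y → 0 < t →
      c * (min 1 ((x-1)*(y-1)/t) * Real.exp (-(x-y)^2/(2*t))) ≤
        Real.exp (-(x-y)^2/(2*t)) - Real.exp (-(x+y-2)^2/(2*t)) ∧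
      Real.exp (-(x-y)^2/(2*t)) - Real.exp (-(x+y-2)^2/(2*t)) ≤
        C * (min 1 ((x-1)*(y-1)/t) * Real.exp (-(x-y)^2/(2*t))) := by
  obtain ⟨c, C, hc, hcC, bounds⟩ := halfline_gaussian_difference_estimate_general
  refine ⟨c, C, hc, hcC, fun x y t hx hy ht => ?_⟩
  have bounds_at_one := bounds 1 x y t ht
  rw [mul_one] at bounds_at_one
  exact bounds_at_one.imp_left fun lower =>
    lower (mul_nonneg (sub_nonneg.mpr hx.le) (sub_nonneg.mpr hy.le))
end

section
/- For all a, b, t > 0 one has ∫₀ᵗ (t−s)^{−1/2}·s^{−3/2}·exp(−a²/(2s))·exp(−b²/(2(t−s))) ds = (√(2π)/a)·t^{−1/2}·exp(−(a+b)²/(2t)). -/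
/-!
The substitution `w = 1/s - 1/t` turns the convolution integral into a multiple of
`∫ w in (0, ∞), w ^ (-1/2) * exp (-p * w - q / w)`, and `w = x²` together with completing the square
reduces the latter to the integral of `exp (-(√p * x - √q / x)²)` over `(0, ∞)`. That integral is
half the Gaussian one divided by `√p`, by the Cauchy–Schlömilch transformation: `u = a * x - c / x`
maps `(0, ∞)` onto `ℝ` with `du = (a + c / x²) dx`, and the involution `x ↦ c / (a * x)`, which
changes the sign of `u`, exchanges `a dx` and `(c / x²) dx`, so that for an even integrand the two
summands contribute equally.
-/

open Real MeasureTheory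

section CauchySchlomilch

variable {E : Type*} [NormedAddCommGroup E] [NormedSpace ℝ E] {a c : ℝ} {f : ℝ → E}

lemma hasDerivAt_mul_sub_div (a c : ℝ) {x : ℝ} (hx : x ≠ 0) :
    HasDerivAt (fun x ↦ a * x - c / x) (a + c / x ^ 2) x := by
  have h := ((hasDerivAt_id' x).const_mul a).sub ((hasDerivAt_inv hx).const_mul c)
  simpa [div_eq_mul_inv] using! h

lemma monotoneOn_mul_sub_div (ha : 0 ≤ a) (hc : 0 ≤ c) :
    MonotoneOn (fun x ↦ a * x - c / x) (Set.Ioi 0) := by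
  intro x (hx : 0 < x) y _ hxy
  dsimp only
  gcongr

lemma image_mul_sub_div_Ioi (ha : 0 < a) (hc : 0 < c) :
    (fun x ↦ a * x - c / x) '' Set.Ioi 0 = Set.univ := by
  refine Set.eq_univ_of_forall fun u ↦ ?_
  set r := √(u ^ 2 + 4 * (a * c))
  have r_sq : r ^ 2 = u ^ 2 + 4 * (a * c) := Real.sq_sqrt (by positivity)
  have root_pos : 0 < u + r := by
    have : |u| < r := Real.lt_sqrt_of_sq_lt (by rw [sq_abs]; linarith [mul_pos ha hc])
    linarith [neg_abs_le u]
  refine ⟨(u + r) / (2 * a), Set.mem_Ioi.2 (by positivity), ?_⟩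
  field_simp
  linear_combination r_sq

lemma integral_add_div_sq_smul_comp_mul_sub_div (ha : 0 < a) (hc : 0 < c) (f : ℝ → E) :
    ∫ x in Set.Ioi 0, (a + c / x ^ 2) • f (a * x - c / x) = ∫ u, f u := by
  rw [← integral_image_eq_integral_deriv_smul_of_monotoneOn measurableSet_Ioi
    (fun x hx ↦ (hasDerivAt_mul_sub_div a c (ne_of_gt hx)).hasDerivWithinAt)
    (monotoneOn_mul_sub_div ha.le hc.le), image_mul_sub_div_Ioi ha hc, setIntegral_univ]

lemma integrableOn_add_div_sq_smul_comp_mul_sub_div_iff (ha : 0 < a) (hc : 0 < c) :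
    IntegrableOn (fun x ↦ (a + c / x ^ 2) • f (a * x - c / x)) (Set.Ioi 0) ↔ Integrable f := by
  rw [← integrableOn_image_iff_integrableOn_deriv_smul_of_monotoneOn measurableSet_Ioi
    (fun x hx ↦ (hasDerivAt_mul_sub_div a c (ne_of_gt hx)).hasDerivWithinAt)
    (monotoneOn_mul_sub_div ha.le hc.le), image_mul_sub_div_Ioi ha hc, integrableOn_univ]

lemma integrableOn_Ioi_comp_mul_sub_div (ha : 0 < a) (hc : 0 < c) (hf : Integrable f) :
    IntegrableOn (fun x ↦ f (a * x - c / x)) (Set.Ioi 0) := by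
  have weight_le (x : ℝ) : ‖(a + c / x ^ 2)⁻¹‖ ≤ a⁻¹ := by
    rw [Real.norm_of_nonneg (by positivity)]
    gcongr
    exact le_add_of_nonneg_right (by positivity)
  have weight_measurable : Measurable fun x ↦ (a + c / x ^ 2)⁻¹ := by fun_prop
  have h := ((integrableOn_add_div_sq_smul_comp_mul_sub_div_iff ha hc).2 hf).bdd_smul (a⁻¹)
    weight_measurable.aestronglyMeasurable (.of_forall weight_le)
  refine h.congr (.of_forall fun x ↦ ?_)
  exact inv_smul_smul₀ (by positivity) _

lemma integral_div_sq_smul_comp_div_Ioi {k : ℝ} (hk : 0 < k) (f : ℝ → E) :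
    ∫ x in Set.Ioi 0, (k / x ^ 2) • f (k / x) = ∫ x in Set.Ioi 0, f x := by
  have image_Ioi : (fun x ↦ k / x) '' Set.Ioi 0 = Set.Ioi 0 := by
    refine Set.Subset.antisymm (Set.image_subset_iff.2 fun x hx ↦ div_pos hk hx) fun y hy ↦ ?_
    exact ⟨k / y, div_pos hk hy, div_div_cancel₀ hk.ne'⟩
  have hasDeriv (x : ℝ) (hx : x ∈ Set.Ioi 0) :
      HasDerivWithinAt (fun x ↦ k / x) (-(k / x ^ 2)) (Set.Ioi 0) x := by
    simpa [div_eq_mul_inv] using!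
      ((hasDerivAt_inv (ne_of_gt hx)).const_mul k).hasDerivWithinAt (s := Set.Ioi 0)
  have antitone : AntitoneOn (fun x ↦ k / x) (Set.Ioi 0) := fun x (hx : 0 < x) y _ hxy ↦ by
    dsimp only
    gcongr
  simpa only [image_Ioi, neg_neg] using
    (integral_image_eq_integral_deriv_smul_of_antitoneOn measurableSet_Ioi hasDeriv antitone f).symm

theorem integral_Ioi_comp_mul_sub_div_of_even (ha : 0 < a) (hc : 0 < c) (hf : Integrable f)
    (heven : f.Even) :
    ∫ x in Set.Ioi 0, f (a * x - c / x) = (2 * a)⁻¹ • ∫ u, f u := by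
  set F : ℝ → E := fun x ↦ f (a * x - c / x)
  have integrable_F : IntegrableOn F (Set.Ioi 0) := integrableOn_Ioi_comp_mul_sub_div ha hc hf
  have integrable_weighted : IntegrableOn (fun x ↦ (c / x ^ 2) • F x) (Set.Ioi 0) := by
    refine (((integrableOn_add_div_sq_smul_comp_mul_sub_div_iff ha hc).2 hf).sub
      (integrable_F.smul a)).congr (.of_forall fun x ↦ ?_)
    simp [F, add_smul]
  have F_inversion (x : ℝ) : F (c / a / x) = F x := by
    have : a * (c / a / x) - c / (c / a / x) = -(a * x - c / x) := by field_simp; ring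
    simp only [F, this, heven _]
  have exchange : ∫ x in Set.Ioi 0, (c / x ^ 2) • F x = a • ∫ x in Set.Ioi 0, F x := by
    rw [← integral_div_sq_smul_comp_div_Ioi (div_pos hc ha) F, ← integral_smul]
    simp_rw [F_inversion, smul_smul]
    congr! 3 with x
    field_simp
  rw [eq_inv_smul_iff₀ (by positivity), ← integral_add_div_sq_smul_comp_mul_sub_div ha hc f]
  calc (2 * a) • ∫ x in Set.Ioi 0, F x
      = a • (∫ x in Set.Ioi 0, F x) + ∫ x in Set.Ioi 0, (c / x ^ 2) • F x := by
        rw [exchange, two_mul, add_smul]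
    _ = ∫ x in Set.Ioi 0, (a + c / x ^ 2) • F x := by
        simp_rw [add_smul]
        rw [← integral_smul]
        exact (integral_add (integrable_F.smul a) integrable_weighted).symm

end CauchySchlomilch

section BesselIntegral

variable {p q : ℝ}

theorem integral_exp_neg_mul_sq_sub_div_sq (hp : 0 < p) (hq : 0 < q) :
    ∫ x in Set.Ioi 0, exp (-p * x ^ 2 - q / x ^ 2) = √(π / p) / 2 * exp (-2 * √(p * q)) := by
  have complete_square (x : ℝ) (hx : x ∈ Set.Ioi 0) : exp (-p * x ^ 2 - q / x ^ 2) =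
      exp (-2 * √(p * q)) * exp (-1 * (√p * x - √q / x) ^ 2) := by
    have hx₀ : x ≠ 0 := ne_of_gt hx
    rw [← exp_add, Real.sqrt_mul hp.le]
    congr 1
    field_simp
    linear_combination x ^ 4 * Real.sq_sqrt hp.le + Real.sq_sqrt hq.le
  rw [setIntegral_congr_fun measurableSet_Ioi complete_square, integral_const_mul,
    integral_Ioi_comp_mul_sub_div_of_even (f := fun u ↦ exp (-1 * u ^ 2)) (sqrt_pos.2 hp)
      (sqrt_pos.2 hq) (integrable_exp_neg_mul_sq one_pos) (fun u ↦ by simp only [neg_sq]),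
    integral_gaussian, div_one, Real.sqrt_div pi_nonneg, smul_eq_mul]
  field_simp

theorem integral_rpow_neg_half_mul_exp_neg_mul_sub_div (hp : 0 < p) (hq : 0 < q) :
    ∫ w in Set.Ioi 0, w ^ (-(1 : ℝ) / 2) * exp (-p * w - q / w) =
      √(π / p) * exp (-2 * √(p * q)) := by
  rw [← integral_comp_rpow_Ioi_of_pos (zero_lt_two' ℝ)]
  have integrand_eq (x : ℝ) (hx : x ∈ Set.Ioi 0) :
      (2 * x ^ ((2 : ℝ) - 1)) • ((x ^ (2 : ℝ)) ^ (-(1 : ℝ) / 2) *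
        exp (-p * x ^ (2 : ℝ) - q / x ^ (2 : ℝ))) = 2 * exp (-p * x ^ 2 - q / x ^ 2) := by
    have hx₀ : 0 < x := hx
    have jacobian_cancel : x ^ ((2 : ℝ) - 1) * (x ^ (2 : ℝ)) ^ (-(1 : ℝ) / 2) = 1 := by
      rw [← rpow_mul hx₀.le, ← rpow_add hx₀]
      norm_num
    rw [rpow_two] at jacobian_cancel ⊢
    linear_combination (2 * exp (-p * x ^ 2 - q / x ^ 2)) * jacobian_cancel
  rw [setIntegral_congr_fun measurableSet_Ioi integrand_eq, integral_const_mul,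
    integral_exp_neg_mul_sq_sub_div_sq hp hq]
  ring

end BesselIntegral

section InverseTime

variable {s t : ℝ}

lemma image_inv_sub_inv_Ioo (ht : 0 < t) :
    (fun s ↦ s⁻¹ - t⁻¹) '' Set.Ioo 0 t = Set.Ioi 0 := by
  rw [← Set.image_image (· - t⁻¹) Inv.inv, Set.image_inv_eq_inv, Set.inv_Ioo_0_left ht,
    Set.image_sub_const_Ioi, sub_self]

theorem integral_inv_sq_smul_comp_inv_sub_inv {E : Type*} [NormedAddCommGroup E] [NormedSpace ℝ E]
    (ht : 0 < t) (g : ℝ → E) :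
    ∫ s in Set.Ioo 0 t, (s ^ 2)⁻¹ • g (s⁻¹ - t⁻¹) = ∫ w in Set.Ioi 0, g w := by
  have hasDeriv (s : ℝ) (hs : s ∈ Set.Ioo 0 t) :
      HasDerivWithinAt (fun s ↦ s⁻¹ - t⁻¹) (-(s ^ 2)⁻¹) (Set.Ioo 0 t) s :=
    ((hasDerivAt_inv hs.1.ne').sub_const _).hasDerivWithinAt
  have antitone : AntitoneOn (fun s ↦ s⁻¹ - t⁻¹) (Set.Ioo 0 t) := fun s hs _ _ hle ↦
    sub_le_sub_right (inv_anti₀ hs.1 hle) _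
  simpa only [image_inv_sub_inv_Ioo ht, neg_neg] using
    (integral_image_eq_integral_deriv_smul_of_antitoneOn measurableSet_Ioo hasDeriv antitone g).symm

lemma rpow_mul_rpow_eq_inv_sq_mul_inv_sub_inv_rpow (hs : 0 < s) (hst : s < t) :
    (t - s) ^ (-(1 : ℝ) / 2) * s ^ (-(3 : ℝ) / 2) =
      t ^ (-(1 : ℝ) / 2) * ((s ^ 2)⁻¹ * (s⁻¹ - t⁻¹) ^ (-(1 : ℝ) / 2)) := by
  have ht : 0 < t := hs.trans hst
  have sub_eq : t - s = t * (s * (s⁻¹ - t⁻¹)) := by field_simp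
  have w_pos : 0 < s⁻¹ - t⁻¹ := sub_pos.2 (inv_strictAnti₀ hs hst)
  have s_powers : s ^ (-(1 : ℝ) / 2) * s ^ (-(3 : ℝ) / 2) = (s ^ 2)⁻¹ := by
    rw [← rpow_add hs, ← rpow_two, ← rpow_neg hs.le]
    norm_num
  rw [sub_eq, mul_rpow ht.le (by positivity), mul_rpow hs.le w_pos.le, ← s_powers]
  ring

lemma exp_mul_exp_eq_exp_mul_exp_inv_sub_inv (a b : ℝ) (hs : 0 < s) (hst : s < t) :
    exp (-a ^ 2 / (2 * s)) * exp (-b ^ 2 / (2 * (t - s))) =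
      exp (-(a ^ 2 + b ^ 2) / (2 * t)) *
        exp (-(a ^ 2 / 2) * (s⁻¹ - t⁻¹) - b ^ 2 / (2 * t ^ 2) / (s⁻¹ - t⁻¹)) := by
  have ht : 0 < t := hs.trans hst
  have sub_ne : t - s ≠ 0 := (sub_pos.2 hst).ne'
  have w_eq : s⁻¹ - t⁻¹ = (t - s) / (s * t) := by field_simp
  rw [← exp_add, ← exp_add, w_eq]
  congr 1
  field_simp
  ring

lemma convolution_integrand_eq (a b : ℝ) (hs : 0 < s) (hst : s < t) :
    (t - s) ^ (-(1 : ℝ) / 2) * s ^ (-(3 : ℝ) / 2) *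
        exp (-a ^ 2 / (2 * s)) * exp (-b ^ 2 / (2 * (t - s))) =
      t ^ (-(1 : ℝ) / 2) * exp (-(a ^ 2 + b ^ 2) / (2 * t)) *
        ((s ^ 2)⁻¹ • ((s⁻¹ - t⁻¹) ^ (-(1 : ℝ) / 2) *
          exp (-(a ^ 2 / 2) * (s⁻¹ - t⁻¹) - b ^ 2 / (2 * t ^ 2) / (s⁻¹ - t⁻¹)))) := by
  rw [mul_assoc, rpow_mul_rpow_eq_inv_sq_mul_inv_sub_inv_rpow hs hst,
    exp_mul_exp_eq_exp_mul_exp_inv_sub_inv a b hs hst, smul_eq_mul]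
  ring

end InverseTime

theorem convolution_integral_identity :
    ∀ a b t : ℝ, 0 < a → 0 < b → 0 < t →
      (∫ s in Set.Ioo (0:ℝ) t, (t-s)^(-(1:ℝ)/2) * s^(-(3:ℝ)/2) *
        Real.exp (-a^2/(2*s)) * Real.exp (-b^2/(2*(t-s))))
      = (Real.sqrt (2*Real.pi) / a) * t^(-(1:ℝ)/2) * Real.exp (-(a+b)^2/(2*t)) := by
  intro a b t ha hb ht
  have sqrt_pi_div : √(π / (a ^ 2 / 2)) = √(2 * π) / a := by
    rw [div_div_eq_mul_div, mul_comm π, Real.sqrt_div (by positivity), Real.sqrt_sq ha.le]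
  have sqrt_mul : √(a ^ 2 / 2 * (b ^ 2 / (2 * t ^ 2))) = a * b / (2 * t) := by
    rw [Real.sqrt_eq_iff_mul_self_eq (by positivity) (by positivity)]
    field_simp
  have exp_combine : exp (-(a ^ 2 + b ^ 2) / (2 * t)) * exp (-2 * (a * b / (2 * t))) =
      exp (-(a + b) ^ 2 / (2 * t)) := by
    rw [← exp_add]
    congr 1
    ring
  rw [setIntegral_congr_fun measurableSet_Ioo fun s hs ↦ convolution_integrand_eq a b hs.1 hs.2,
    integral_const_mul, integral_inv_sq_smul_comp_inv_sub_inv ht fun w ↦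
      w ^ (-(1 : ℝ) / 2) * exp (-(a ^ 2 / 2) * w - b ^ 2 / (2 * t ^ 2) / w),
    integral_rpow_neg_half_mul_exp_neg_mul_sub_div (by positivity) (by positivity),
    sqrt_pi_div, sqrt_mul, ← exp_combine]
  ring
end

section
/- There exist absolute constants 0 < c ≤ C such that for every y ≥ 52 and t > 0 with y² ≥ 16·t, and every s with 0 < s ≤ 4t²/y², one has c·s·y²/t² ≤ (p(t,1,y) − p(t−s,1,y))/p(t,1,y) ≤ C·s·y²/t². (One may take c = 1/156.) -/
open Real MeasureTheory

/-!
The integral representation `π I₀(z) = ∫₀^π cosh (z sin θ) dθ` shows that `I₀` increases with `|z|`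
and that `I₀(b) ≤ exp |b - a| · I₀(a)`. For `τ ≤ t` put `d = τ⁻¹ - t⁻¹`. Passing from time `t` to
time `τ` multiplies `t⁻¹` by `t / τ = 1 + t d`, the Gaussian factor by `exp (-(x² + y²) d / 2)`, and
`I₀(xy/t)` by a number between `1` and `exp (|xy| d)`. Hence
`exp (-(x² + y²) d / 2) ≤ p(τ,x,y) / p(t,x,y) ≤ exp (t d - (|x| - |y|)² d / 2)`.
With `τ = t - s`, when `2 |x| ≤ |y|` and `16 t ≤ y²`, both exponents are comparable to
`-s y² / t²`, and `s ≤ 4 t² / y²` keeps them bounded, so that `1 - exp` is comparable to its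
argument.
-/

lemma cosh_le_exp_abs_sub_mul_cosh (a b : ℝ) : cosh b ≤ exp |b - a| * cosh a := by
  have hpos : exp b ≤ exp |b - a| * exp a := by
    rw [← exp_add, exp_le_exp]
    linarith [le_abs_self (b - a)]
  have hneg : exp (-b) ≤ exp |b - a| * exp (-a) := by
    rw [← exp_add, exp_le_exp]
    linarith [neg_le_abs (b - a)]
  rw [cosh_eq, cosh_eq]
  linarith

lemma abs_mul_sin_le (r θ : ℝ) : |r * sin θ| ≤ |r| := by
  rw [abs_mul]
  exact mul_le_of_le_one_right (abs_nonneg r) (abs_sin_le_one θ)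

lemma exp_neg_le_one_sub_half {u : ℝ} (hu₀ : 0 ≤ u) (hu₁ : u ≤ 1) : exp (-u) ≤ 1 - u / 2 := by
  have hu : 0 < 1 + u := by positivity
  calc exp (-u) ≤ (1 + u)⁻¹ := by
        rw [exp_neg]
        exact inv_anti₀ hu (by linarith [add_one_le_exp u])
    _ ≤ 1 - u / 2 := by
        rw [inv_le_iff_one_le_mul₀ hu]
        nlinarith

lemma div_sq_le_inv_sub_inv {s t : ℝ} (ht : t ≠ 0) (hst : s < t) :
    s / t ^ 2 ≤ (t - s)⁻¹ - t⁻¹ := by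
  have hts : 0 < t - s := sub_pos.2 hst
  have hgap : (t - s)⁻¹ - t⁻¹ - s / t ^ 2 = s ^ 2 / (t ^ 2 * (t - s)) := by
    field_simp
    ring
  rw [← sub_nonneg, hgap]
  positivity

lemma inv_sub_inv_le_four_thirds_mul {s t : ℝ} (ht : 0 < t) (hs : 0 ≤ s) (hst : 4 * s ≤ t) :
    (t - s)⁻¹ - t⁻¹ ≤ 4 / 3 * (s / t ^ 2) := by
  have hts : 0 < t - s := by linarith
  have hgap : 4 / 3 * (s / t ^ 2) - ((t - s)⁻¹ - t⁻¹)
      = s * (t - 4 * s) / (3 * t ^ 2 * (t - s)) := by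
    field_simp
    ring
  rw [← sub_nonneg, hgap]
  have : 0 ≤ t - 4 * s := sub_nonneg.2 hst
  positivity

lemma integral_sin_pow_even_eq_factorial (n : ℕ) :
    ∫ θ in (0 : ℝ)..π, sin θ ^ (2 * n)
      = π * ((2 * n).factorial / (4 ^ n * (n.factorial : ℝ) ^ 2)) := by
  rw [integral_sin_pow_even]
  congr 1
  induction n with
  | zero => simp
  | succ n ih =>
    rw [Finset.prod_range_succ, ih, Nat.mul_succ, Nat.factorial_succ, Nat.factorial_succ,
      Nat.factorial_succ]
    push_cast
    field_simp
    ring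

lemma hasSum_integral_cosh_mul_sin (z : ℝ) :
    HasSum (fun n : ℕ => ∫ θ in (0 : ℝ)..π, (z * sin θ) ^ (2 * n) / (2 * n).factorial)
      (∫ θ in (0 : ℝ)..π, cosh (z * sin θ)) := by
  refine intervalIntegral.hasSum_integral_of_dominated_convergence
    (fun n _ => z ^ (2 * n) / (2 * n).factorial) (fun n => ?_) (fun n => ?_)
    (ae_of_all _ fun _ _ => (hasSum_cosh z).summable) intervalIntegrable_const
    (ae_of_all _ fun θ _ => hasSum_cosh (z * sin θ))
  · fun_prop
  · refine ae_of_all _ fun θ _ => ?_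
    have habs : |z * sin θ| ≤ |z| := abs_mul_sin_le z θ
    rw [norm_div, norm_pow, RCLike.norm_natCast, norm_eq_abs, ← (even_two_mul n).pow_abs z]
    gcongr

theorem I0_eq_integral (z : ℝ) : I0 z = π⁻¹ * ∫ θ in (0 : ℝ)..π, cosh (z * sin θ) := by
  rw [← (hasSum_integral_cosh_mul_sin z).tsum_eq, ← tsum_mul_left, I0]
  refine tsum_congr fun n => ?_
  simp only [mul_pow, div_eq_mul_inv, intervalIntegral.integral_mul_const,
    intervalIntegral.integral_const_mul, integral_sin_pow_even_eq_factorial]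
  have two_pow : (2 : ℝ) ^ (2 * n) = 4 ^ n := by rw [pow_mul]; norm_num
  rw [inv_pow, two_pow]
  field_simp

lemma intervalIntegrable_cosh_mul_sin (z : ℝ) :
    IntervalIntegrable (fun θ => cosh (z * sin θ)) volume 0 π :=
  Continuous.intervalIntegrable (by fun_prop) 0 π

lemma I0_pos (z : ℝ) : 0 < I0 z := by
  rw [I0_eq_integral]
  exact mul_pos (inv_pos.2 pi_pos) <| intervalIntegral.intervalIntegral_pos_of_pos
    (intervalIntegrable_cosh_mul_sin z) (fun θ => cosh_pos (z * sin θ)) pi_pos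

lemma I0_le_I0 {a b : ℝ} (hab : |a| ≤ |b|) : I0 a ≤ I0 b := by
  rw [I0_eq_integral, I0_eq_integral]
  refine mul_le_mul_of_nonneg_left ?_ (inv_nonneg.2 pi_pos.le)
  refine intervalIntegral.integral_mono_on pi_pos.le (intervalIntegrable_cosh_mul_sin a)
    (intervalIntegrable_cosh_mul_sin b) fun θ _ => ?_
  rw [cosh_le_cosh, abs_mul, abs_mul]
  exact mul_le_mul_of_nonneg_right hab (abs_nonneg _)

theorem I0_le_exp_abs_sub_mul_I0 (a b : ℝ) : I0 b ≤ exp |b - a| * I0 a := by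
  rw [I0_eq_integral, I0_eq_integral, mul_left_comm,
    ← intervalIntegral.integral_const_mul (exp |b - a|)]
  refine mul_le_mul_of_nonneg_left ?_ (inv_nonneg.2 pi_pos.le)
  refine intervalIntegral.integral_mono_on pi_pos.le (intervalIntegrable_cosh_mul_sin b)
    ((intervalIntegrable_cosh_mul_sin a).const_mul _) fun θ _ => ?_
  calc cosh (b * sin θ)
      ≤ exp |b * sin θ - a * sin θ| * cosh (a * sin θ) := cosh_le_exp_abs_sub_mul_cosh _ _
    _ ≤ exp |b - a| * cosh (a * sin θ) := by
        rw [← sub_mul]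
        exact mul_le_mul_of_nonneg_right (exp_le_exp.2 (abs_mul_sin_le _ θ)) (cosh_pos _).le

section HeatKernel

variable {τ t : ℝ} (x y : ℝ)

lemma pk_pos (ht : 0 < t) : 0 < pk t x y :=
  mul_pos (mul_pos (inv_pos.2 ht) (exp_pos _)) (I0_pos _)

lemma pk_eq_exp_mul (hτ : τ ≠ 0) (ht : t ≠ 0) :
    pk τ x y = t / τ * exp (-((x ^ 2 + y ^ 2) / 2 * (τ⁻¹ - t⁻¹)))
      * (t⁻¹ * exp (-(x ^ 2 + y ^ 2) / (2 * t)) * I0 (x * y / τ)) := by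
  have hexp : exp (-(x ^ 2 + y ^ 2) / (2 * τ))
      = exp (-((x ^ 2 + y ^ 2) / 2 * (τ⁻¹ - t⁻¹))) * exp (-(x ^ 2 + y ^ 2) / (2 * t)) := by
    rw [← exp_add]
    congr 1
    field_simp
    ring
  rw [pk, hexp]
  field_simp

theorem exp_mul_pk_le_pk (hτ : 0 < τ) (hτt : τ ≤ t) :
    t / τ * exp (-((x ^ 2 + y ^ 2) / 2 * (τ⁻¹ - t⁻¹))) * pk t x y ≤ pk τ x y := by
  have ht : 0 < t := hτ.trans_le hτt
  have hI0 : I0 (x * y / t) ≤ I0 (x * y / τ) := by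
    apply I0_le_I0
    rw [abs_div, abs_div, abs_of_pos hτ, abs_of_pos ht]
    gcongr
  rw [pk_eq_exp_mul x y hτ.ne' ht.ne', pk]
  gcongr

theorem pk_le_exp_mul_pk (hτ : 0 < τ) (hτt : τ ≤ t) :
    pk τ x y ≤ t / τ * exp (-((|x| - |y|) ^ 2 / 2 * (τ⁻¹ - t⁻¹))) * pk t x y := by
  have ht : 0 < t := hτ.trans_le hτt
  have hd : 0 ≤ τ⁻¹ - t⁻¹ := sub_nonneg.2 (inv_anti₀ hτ hτt)
  have hI0 : I0 (x * y / τ) ≤ exp (|x| * |y| * (τ⁻¹ - t⁻¹)) * I0 (x * y / t) := by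
    convert I0_le_exp_abs_sub_mul_I0 (x * y / t) (x * y / τ) using 3
    rw [div_eq_mul_inv, div_eq_mul_inv, ← mul_sub, abs_mul, abs_mul, abs_of_nonneg hd]
  have hexponent : -((|x| - |y|) ^ 2 / 2 * (τ⁻¹ - t⁻¹))
      = -((x ^ 2 + y ^ 2) / 2 * (τ⁻¹ - t⁻¹)) + |x| * |y| * (τ⁻¹ - t⁻¹) := by
    rw [← sq_abs x, ← sq_abs y]
    ring
  calc pk τ x y
      ≤ t / τ * exp (-((x ^ 2 + y ^ 2) / 2 * (τ⁻¹ - t⁻¹))) * (t⁻¹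
          * exp (-(x ^ 2 + y ^ 2) / (2 * t))
          * (exp (|x| * |y| * (τ⁻¹ - t⁻¹)) * I0 (x * y / t))) := by
        rw [pk_eq_exp_mul x y hτ.ne' ht.ne']
        gcongr
    _ = t / τ * exp (-((|x| - |y|) ^ 2 / 2 * (τ⁻¹ - t⁻¹))) * pk t x y := by
        rw [hexponent, exp_add, pk]
        ring

theorem pk_sub_div_pk_le (hτ : 0 < τ) (hτt : τ ≤ t) :
    (pk t x y - pk τ x y) / pk t x y ≤ (x ^ 2 + y ^ 2) / 2 * (τ⁻¹ - t⁻¹) := by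
  have hpk : 0 < pk t x y := pk_pos x y (hτ.trans_le hτt)
  set u := (x ^ 2 + y ^ 2) / 2 * (τ⁻¹ - t⁻¹)
  have hlower : (1 - u) * pk t x y ≤ pk τ x y :=
    calc (1 - u) * pk t x y ≤ exp (-u) * pk t x y := by gcongr; exact one_sub_le_exp_neg u
      _ ≤ t / τ * exp (-u) * pk t x y := by
          gcongr
          exact le_mul_of_one_le_left (exp_pos _).le ((one_le_div hτ).2 hτt)
      _ ≤ pk τ x y := exp_mul_pk_le_pk x y hτ hτt
  rw [div_le_iff₀ hpk]
  linarith

theorem one_sub_exp_le_pk_sub_div_pk (hτ : 0 < τ) (hτt : τ ≤ t) :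
    1 - exp (-(((|x| - |y|) ^ 2 / 2 - t) * (τ⁻¹ - t⁻¹))) ≤ (pk t x y - pk τ x y) / pk t x y := by
  have ht : 0 < t := hτ.trans_le hτt
  have hpk : 0 < pk t x y := pk_pos x y ht
  have hratio : t / τ ≤ exp (t * (τ⁻¹ - t⁻¹)) := by
    have : t * (τ⁻¹ - t⁻¹) + 1 = t / τ := by field_simp; ring
    exact this ▸ add_one_le_exp _
  have hupper : pk τ x y
      ≤ exp (-(((|x| - |y|) ^ 2 / 2 - t) * (τ⁻¹ - t⁻¹))) * pk t x y :=
    calc pk τ x y ≤ t / τ * exp (-((|x| - |y|) ^ 2 / 2 * (τ⁻¹ - t⁻¹))) * pk t x y :=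
          pk_le_exp_mul_pk x y hτ hτt
      _ ≤ exp (t * (τ⁻¹ - t⁻¹)) * exp (-((|x| - |y|) ^ 2 / 2 * (τ⁻¹ - t⁻¹))) * pk t x y := by
          gcongr
      _ = exp (-(((|x| - |y|) ^ 2 / 2 - t) * (τ⁻¹ - t⁻¹))) * pk t x y := by
          rw [← exp_add]
          ring_nf
  rw [le_div_iff₀ hpk]
  linarith

end HeatKernel

section SmallTimeDifference

variable {x y t s : ℝ}

theorem pk_sub_div_pk_le_mul (hxy : 2 * |x| ≤ |y|) (ht : 0 < t) (hs : 0 ≤ s) (hst : 4 * s ≤ t) :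
    (pk t x y - pk (t - s) x y) / pk t x y ≤ 5 / 6 * (s * y ^ 2 / t ^ 2) := by
  have hgauss : (x ^ 2 + y ^ 2) / 2 ≤ 5 / 8 * y ^ 2 := by
    nlinarith [sq_abs x, sq_abs y, abs_nonneg x]
  have hd : (t - s)⁻¹ - t⁻¹ ≤ 4 / 3 * (s / t ^ 2) := inv_sub_inv_le_four_thirds_mul ht hs hst
  calc (pk t x y - pk (t - s) x y) / pk t x y
      ≤ (x ^ 2 + y ^ 2) / 2 * ((t - s)⁻¹ - t⁻¹) :=
        pk_sub_div_pk_le x y (by linarith) (sub_le_self t hs)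
    _ ≤ (x ^ 2 + y ^ 2) / 2 * (4 / 3 * (s / t ^ 2)) := by gcongr
    _ ≤ 5 / 8 * y ^ 2 * (4 / 3 * (s / t ^ 2)) := by gcongr
    _ = 5 / 6 * (s * y ^ 2 / t ^ 2) := by ring

theorem mul_le_pk_sub_div_pk (hxy : 2 * |x| ≤ |y|) (ht : 0 < t) (hty : 16 * t ≤ y ^ 2)
    (hs : 0 ≤ s) (hst : s < t) (hsy : s * y ^ 2 / t ^ 2 ≤ 16) :
    1 / 32 * (s * y ^ 2 / t ^ 2) ≤ (pk t x y - pk (t - s) x y) / pk t x y := by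
  have hgauss : y ^ 2 / 16 ≤ (|x| - |y|) ^ 2 / 2 - t := by
    nlinarith [sq_abs y, abs_nonneg x]
  have hd : s / t ^ 2 ≤ (t - s)⁻¹ - t⁻¹ := div_sq_le_inv_sub_inv ht.ne' hst
  set u := s * y ^ 2 / t ^ 2 / 16 with hu
  have hu₀ : 0 ≤ u := by positivity
  have hu₁ : u ≤ 1 := by linarith
  have hexponent : u ≤ ((|x| - |y|) ^ 2 / 2 - t) * ((t - s)⁻¹ - t⁻¹) :=
    calc u = y ^ 2 / 16 * (s / t ^ 2) := by rw [hu]; ring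
      _ ≤ y ^ 2 / 16 * ((t - s)⁻¹ - t⁻¹) := by gcongr
      _ ≤ ((|x| - |y|) ^ 2 / 2 - t) * ((t - s)⁻¹ - t⁻¹) :=
          mul_le_mul_of_nonneg_right hgauss (le_trans (by positivity) hd)
  calc 1 / 32 * (s * y ^ 2 / t ^ 2) = u / 2 := by rw [hu]; ring
    _ ≤ 1 - exp (-u) := by linarith [exp_neg_le_one_sub_half hu₀ hu₁]
    _ ≤ 1 - exp (-(((|x| - |y|) ^ 2 / 2 - t) * ((t - s)⁻¹ - t⁻¹))) := by gcongr
    _ ≤ (pk t x y - pk (t - s) x y) / pk t x y :=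
        one_sub_exp_le_pk_sub_div_pk x y (sub_pos.2 hst) (sub_le_self t hs)

theorem bessel_heat_kernel_time_difference_small_s_general (hxy : 2 * |x| ≤ |y|) (ht : 0 < t)
    (hty : 16 * t ≤ y ^ 2) (hs : 0 ≤ s) (hsty : s ≤ 4 * t ^ 2 / y ^ 2) :
    1 / 32 * (s * y ^ 2 / t ^ 2) ≤ (pk t x y - pk (t - s) x y) / pk t x y ∧
      (pk t x y - pk (t - s) x y) / pk t x y ≤ 5 / 6 * (s * y ^ 2 / t ^ 2) := by
  have hsy : s * y ^ 2 ≤ 4 * t ^ 2 := (le_div_iff₀ (by linarith)).1 hsty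
  have hst : 4 * s ≤ t := by nlinarith
  have hq : s * y ^ 2 / t ^ 2 ≤ 4 := (div_le_iff₀ (by positivity)).2 hsy
  exact ⟨mul_le_pk_sub_div_pk hxy ht hty hs (by linarith) (by linarith),
    pk_sub_div_pk_le_mul hxy ht hs hst⟩

end SmallTimeDifference

theorem bessel_heat_kernel_time_difference_small_s :
    ∃ c C : ℝ, 0 < c ∧ c ≤ C ∧ ∀ y t s : ℝ, 52 ≤ y → 0 < t → 16*t ≤ y^2 →
      0 < s → s ≤ 4*t^2/y^2 →
      c * (s * y^2/t^2) ≤ (pk t 1 y - pk (t-s) 1 y) / pk t 1 y ∧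
      (pk t 1 y - pk (t-s) 1 y) / pk t 1 y ≤ C * (s * y^2/t^2) :=
  ⟨1 / 32, 5 / 6, by norm_num, by norm_num, fun y _ _ hy ht hty hs hsty =>
    bessel_heat_kernel_time_difference_small_s_general
      (by rw [abs_one]; linarith [le_abs_self y]) ht hty hs.le hsty⟩
end

section
/- There exist absolute constants 0 < c ≤ C such that for every x > 1, c·min(x−1, √x·exp(−(x−1)²/(4x))) ≤ (x−1)·∫₀^{2x} s^{−1/2}·exp(−(x−1)²/(2s)) ds ≤ C·min(x−1, √x·exp(−(x−1)²/(4x))). -/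
open Real MeasureTheory

/-!
Write `I` for `∫₀ᵇ s ^ (p - 1) * exp (-k / s) ds`. Integrating the derivatives
`(s ^ p * exp (-k / s))' = (p + k / s) * (s ^ (p - 1) * exp (-k / s))` and
`(s ^ (p + 1) * exp (-k / s))' = ((p + 1) * s + k) * (s ^ (p - 1) * exp (-k / s))` over `(0, b)`,
and bounding the first factor by its value at `s = b`, gives
`(p + k / b) * I ≤ b ^ p * exp (-k / b) ≤ (p + 1 + k / b) * I`.
For `p = 1 / 2`, `k = (x - 1) ^ 2 / 2` and `b = 2 * x` both coefficients of `I` are comparable to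
`x` when `1 ≤ x`, so that `I` is comparable to `E / √x` with `E = exp (-(x - 1) ^ 2 / (4 * x))`.
Finally, `(x - 1) * (E / √x)` is comparable to `min (x - 1) (√x * E)`: it is at most each entry,
and at least half the first one for `x ≤ 2`, where `√x ≤ 2 * E`, and half the second one for
`2 ≤ x`, where `x ≤ 2 * (x - 1)`.
-/

section RpowMulExpNegDiv

variable {p k b s : ℝ}

lemma exp_neg_div_le_one (hk : 0 ≤ k) (hs : 0 ≤ s) : exp (-k / s) ≤ 1 :=
  exp_le_one_iff.2 (div_nonpos_of_nonpos_of_nonneg (neg_nonpos.2 hk) hs)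

lemma rpow_mul_exp_neg_div_nonneg (hs : 0 ≤ s) : 0 ≤ s ^ p * exp (-k / s) :=
  mul_nonneg (rpow_nonneg hs p) (exp_pos _).le

lemma rpow_mul_exp_neg_div_le_rpow (hk : 0 ≤ k) (hs : 0 ≤ s) : s ^ p * exp (-k / s) ≤ s ^ p :=
  mul_le_of_le_one_right (rpow_nonneg hs p) (exp_neg_div_le_one hk hs)

lemma hasDerivAt_rpow_mul_exp_neg_div (p k : ℝ) (hs : s ≠ 0) :
    HasDerivAt (fun t : ℝ ↦ t ^ p * exp (-k / t))
      ((p + k / s) * (s ^ (p - 1) * exp (-k / s))) s := by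
  have hdiv : HasDerivAt (fun t : ℝ ↦ -k / t) (k / s ^ 2) s := by
    simpa [div_eq_mul_inv] using (hasDerivAt_inv hs).const_mul (-k)
  refine ((hasDerivAt_rpow_const (Or.inl hs)).mul hdiv.exp).congr_deriv ?_
  rw [rpow_sub_one hs]
  field_simp

lemma continuousOn_rpow_mul_exp_neg_div (hp : 0 < p) (hk : 0 ≤ k) :
    ContinuousOn (fun t : ℝ ↦ t ^ p * exp (-k / t)) (Set.Ici 0) := by
  intro s hs
  rcases (Set.mem_Ici.1 hs).eq_or_lt with rfl | hs
  · have hrpow : Filter.Tendsto (fun t : ℝ ↦ t ^ p) (nhdsWithin 0 (Set.Ici 0)) (nhds 0) := by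
      simpa only [zero_rpow hp.ne'] using
        ((continuous_rpow_const hp.le).tendsto 0).mono_left nhdsWithin_le_nhds
    simp only [ContinuousWithinAt, zero_rpow hp.ne', zero_mul]
    refine squeeze_zero' ?_ ?_ hrpow
    · filter_upwards [self_mem_nhdsWithin] with t ht using rpow_mul_exp_neg_div_nonneg ht
    · filter_upwards [self_mem_nhdsWithin] with t ht using rpow_mul_exp_neg_div_le_rpow hk ht
  · exact (hasDerivAt_rpow_mul_exp_neg_div p k hs.ne').continuousAt.continuousWithinAt

lemma integrableOn_rpow_mul_exp_neg_div (hp : -1 < p) (hk : 0 ≤ k) (hb : 0 ≤ b) :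
    IntegrableOn (fun s : ℝ ↦ s ^ p * exp (-k / s)) (Set.Icc 0 b) := by
  have hrpow : IntegrableOn (fun s : ℝ ↦ s ^ p) (Set.Icc 0 b) :=
    (intervalIntegrable_iff_integrableOn_Icc_of_le hb).1
      (intervalIntegral.intervalIntegrable_rpow' hp)
  refine hrpow.mono' (by fun_prop) ?_
  filter_upwards [ae_restrict_mem measurableSet_Icc] with s hs
  rw [norm_of_nonneg (rpow_mul_exp_neg_div_nonneg hs.1)]
  exact rpow_mul_exp_neg_div_le_rpow hk hs.1

lemma integral_rpow_mul_exp_neg_div_nonneg (hb : 0 ≤ b) :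
    0 ≤ ∫ s in (0 : ℝ)..b, s ^ p * exp (-k / s) :=
  intervalIntegral.integral_nonneg hb fun _ hs ↦ rpow_mul_exp_neg_div_nonneg hs.1

theorem mul_integral_rpow_mul_exp_neg_div_le (hp : 0 < p) (hk : 0 ≤ k) (hb : 0 ≤ b) :
    (p + k / b) * ∫ s in (0 : ℝ)..b, s ^ (p - 1) * exp (-k / s) ≤ b ^ p * exp (-k / b) := by
  have hint := integrableOn_rpow_mul_exp_neg_div (p := p - 1) (by linarith) hk hb
  have hcoeff : ∀ s ∈ Set.Ioo 0 b, p + k / b ≤ p + k / s := fun s hs ↦ by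
    have hs0 : 0 < s := hs.1
    gcongr
    exact hs.2.le
  have hFTC := intervalIntegral.integral_le_sub_of_hasDeriv_right_of_le hb
    ((continuousOn_rpow_mul_exp_neg_div hp hk).mono Set.Icc_subset_Ici_self)
    (fun s hs ↦ (hasDerivAt_rpow_mul_exp_neg_div p k hs.1.ne').hasDerivWithinAt)
    (hint.const_mul (p + k / b))
    (fun s hs ↦ mul_le_mul_of_nonneg_right (hcoeff s hs) (rpow_mul_exp_neg_div_nonneg hs.1.le))
  simpa [intervalIntegral.integral_const_mul, zero_rpow hp.ne'] using hFTC

theorem le_mul_integral_rpow_mul_exp_neg_div (hp : 0 < p) (hk : 0 ≤ k) (hb : 0 < b) :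
    b ^ p * exp (-k / b) ≤ (p + 1 + k / b) * ∫ s in (0 : ℝ)..b, s ^ (p - 1) * exp (-k / s) := by
  have hp' : 0 < p + 1 := by linarith
  have hint := integrableOn_rpow_mul_exp_neg_div (p := p - 1) (by linarith) hk hb.le
  have hderiv : ∀ s ∈ Set.Ioo 0 b, HasDerivAt (fun t : ℝ ↦ t ^ (p + 1) * exp (-k / t))
      (((p + 1) * s + k) * (s ^ (p - 1) * exp (-k / s))) s := fun s hs ↦ by
    have hs0 := hs.1.ne'
    refine (hasDerivAt_rpow_mul_exp_neg_div (p + 1) k hs0).congr_deriv ?_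
    rw [add_sub_cancel_right, rpow_sub_one hs0]
    field_simp
  have hcoeff : ∀ s ∈ Set.Ioo 0 b, (p + 1) * s + k ≤ (p + 1) * b + k := fun s hs ↦ by
    gcongr
    exact hs.2.le
  have hFTC := intervalIntegral.sub_le_integral_of_hasDeriv_right_of_le hb.le
    ((continuousOn_rpow_mul_exp_neg_div hp' hk).mono Set.Icc_subset_Ici_self)
    (fun s hs ↦ (hderiv s hs).hasDerivWithinAt)
    (hint.const_mul ((p + 1) * b + k))
    (fun s hs ↦ mul_le_mul_of_nonneg_right (hcoeff s hs) (rpow_mul_exp_neg_div_nonneg hs.1.le))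
  rw [intervalIntegral.integral_const_mul, zero_rpow hp'.ne', zero_mul, sub_zero,
    rpow_add_one hb.ne'] at hFTC
  refine le_of_mul_le_mul_left ?_ hb
  calc b * (b ^ p * exp (-k / b)) = b ^ p * b * exp (-k / b) := by ring
    _ ≤ ((p + 1) * b + k) * ∫ s in (0 : ℝ)..b, s ^ (p - 1) * exp (-k / s) := hFTC
    _ = b * ((p + 1 + k / b) * ∫ s in (0 : ℝ)..b, s ^ (p - 1) * exp (-k / s)) := by
      field_simp

end RpowMulExpNegDiv

section

variable {x : ℝ}

lemma setIntegral_eq_intervalIntegral_rpow_mul_exp_neg_div (K : ℝ) {b : ℝ} (hb : 0 ≤ b) :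
    ∫ s in Set.Ioo (0 : ℝ) b, s ^ (-(1 : ℝ) / 2) * exp (-K / (2 * s)) =
      ∫ s in (0 : ℝ)..b, s ^ ((1 / 2 : ℝ) - 1) * exp (-(K / 2) / s) := by
  rw [intervalIntegral.integral_of_le hb, integral_Ioc_eq_integral_Ioo]
  congr! 4
  · norm_num
  · rw [← neg_div, div_div]

lemma rpow_half_mul_exp_neg_sq_div (x : ℝ) :
    (2 * x) ^ (1 / 2 : ℝ) * exp (-((x - 1) ^ 2 / 2) / (2 * x)) =
      √2 * (√x * exp (-(x - 1) ^ 2 / (4 * x))) := by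
  rw [← sqrt_eq_rpow, sqrt_mul zero_le_two, mul_assoc, ← neg_div, div_div]
  ring_nf

lemma setIntegral_rpow_mul_exp_neg_sq_div_le (hx : 0 < x) :
    ∫ s in Set.Ioo (0 : ℝ) (2 * x), s ^ (-(1 : ℝ) / 2) * exp (-(x - 1) ^ 2 / (2 * s)) ≤
      4 * √2 * (exp (-(x - 1) ^ 2 / (4 * x)) / √x) := by
  have hb : 0 ≤ 2 * x := by positivity
  have hbound := mul_integral_rpow_mul_exp_neg_div_le (p := 1 / 2) (k := (x - 1) ^ 2 / 2)
    (by norm_num) (by positivity) hb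
  rw [rpow_half_mul_exp_neg_sq_div] at hbound
  rw [setIntegral_eq_intervalIntegral_rpow_mul_exp_neg_div _ hb]
  set I := ∫ s in (0 : ℝ)..2 * x, s ^ ((1 / 2 : ℝ) - 1) * exp (-((x - 1) ^ 2 / 2) / s)
  have hI : 0 ≤ I := integral_rpow_mul_exp_neg_div_nonneg hb
  have hcoeff : x / 4 ≤ 1 / 2 + (x - 1) ^ 2 / 2 / (2 * x) := by
    field_simp
    linarith
  refine le_of_mul_le_mul_left ?_ (show 0 < x / 4 by positivity)
  calc x / 4 * I ≤ (1 / 2 + (x - 1) ^ 2 / 2 / (2 * x)) * I := mul_le_mul_of_nonneg_right hcoeff hI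
    _ ≤ √2 * (√x * exp (-(x - 1) ^ 2 / (4 * x))) := hbound
    _ = √2 * (x / √x * exp (-(x - 1) ^ 2 / (4 * x))) := by rw [div_sqrt]
    _ = x / 4 * (4 * √2 * (exp (-(x - 1) ^ 2 / (4 * x)) / √x)) := by ring

lemma le_setIntegral_rpow_mul_exp_neg_sq_div (hx : 1 ≤ x) :
    2 * √2 / 3 * (exp (-(x - 1) ^ 2 / (4 * x)) / √x) ≤
      ∫ s in Set.Ioo (0 : ℝ) (2 * x), s ^ (-(1 : ℝ) / 2) * exp (-(x - 1) ^ 2 / (2 * s)) := by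
  have hx0 : 0 < x := by linarith
  have hb : 0 < 2 * x := by positivity
  have hbound := le_mul_integral_rpow_mul_exp_neg_div (p := 1 / 2) (k := (x - 1) ^ 2 / 2)
    (by norm_num) (by positivity) hb
  rw [rpow_half_mul_exp_neg_sq_div] at hbound
  rw [setIntegral_eq_intervalIntegral_rpow_mul_exp_neg_div _ hb.le]
  set I := ∫ s in (0 : ℝ)..2 * x, s ^ ((1 / 2 : ℝ) - 1) * exp (-((x - 1) ^ 2 / 2) / s)
  have hI : 0 ≤ I := integral_rpow_mul_exp_neg_div_nonneg hb.le
  have hcoeff : 1 / 2 + 1 + (x - 1) ^ 2 / 2 / (2 * x) ≤ 3 * x / 2 := by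
    field_simp
    nlinarith
  refine le_of_mul_le_mul_left ?_ (show 0 < 3 * x / 2 by positivity)
  calc 3 * x / 2 * (2 * √2 / 3 * (exp (-(x - 1) ^ 2 / (4 * x)) / √x))
      = √2 * (x / √x * exp (-(x - 1) ^ 2 / (4 * x))) := by ring
    _ = √2 * (√x * exp (-(x - 1) ^ 2 / (4 * x))) := by rw [div_sqrt]
    _ ≤ (1 / 2 + 1 + (x - 1) ^ 2 / 2 / (2 * x)) * I := hbound
    _ ≤ 3 * x / 2 * I := mul_le_mul_of_nonneg_right hcoeff hI

lemma sub_one_mul_div_sqrt_le_min (hx : 1 ≤ x) {E : ℝ} (hE0 : 0 ≤ E) (hE1 : E ≤ 1) :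
    (x - 1) * (E / √x) ≤ min (x - 1) (√x * E) := by
  have hd : 0 ≤ x - 1 := sub_nonneg.2 hx
  have hsqrt : 1 ≤ √x := one_le_sqrt.2 hx
  refine le_min (mul_le_of_le_one_right hd (div_le_one_of_le₀ (hE1.trans hsqrt) (by positivity))) ?_
  calc (x - 1) * (E / √x) ≤ x * (E / √x) := by gcongr; linarith
    _ = x / √x * E := by ring
    _ = √x * E := by rw [div_sqrt]

lemma sqrt_le_two_mul_exp_neg_sq_div (hx : 1 ≤ x) (hx2 : x ≤ 2) :
    √x ≤ 2 * exp (-(x - 1) ^ 2 / (4 * x)) := by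
  have hsqrt : √x ≤ 3 / 2 := sqrt_le_iff.2 ⟨by norm_num, by linarith⟩
  have hexponent : -(1 / 4) ≤ -(x - 1) ^ 2 / (4 * x) := by
    rw [le_div_iff₀ (by linarith)]
    nlinarith
  linarith [add_one_le_exp (-(x - 1) ^ 2 / (4 * x))]

lemma min_le_two_mul_sub_one_mul_exp_div_sqrt (hx : 1 ≤ x) :
    min (x - 1) (√x * exp (-(x - 1) ^ 2 / (4 * x))) ≤
      2 * ((x - 1) * (exp (-(x - 1) ^ 2 / (4 * x)) / √x)) := by
  have hd : 0 ≤ x - 1 := sub_nonneg.2 hx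
  have hsqrt : 0 < √x := sqrt_pos.2 (by linarith)
  rcases le_total x 2 with hx2 | hx2
  · refine (min_le_left _ _).trans ?_
    calc x - 1 ≤ (x - 1) * (2 * exp (-(x - 1) ^ 2 / (4 * x)) / √x) :=
          le_mul_of_one_le_right hd
            ((one_le_div hsqrt).2 (sqrt_le_two_mul_exp_neg_sq_div hx hx2))
      _ = 2 * ((x - 1) * (exp (-(x - 1) ^ 2 / (4 * x)) / √x)) := by ring
  · refine (min_le_right _ _).trans ?_
    calc √x * exp (-(x - 1) ^ 2 / (4 * x))
        = x * (exp (-(x - 1) ^ 2 / (4 * x)) / √x) := by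
          rw [mul_div_left_comm, div_sqrt, mul_comm]
      _ ≤ 2 * (x - 1) * (exp (-(x - 1) ^ 2 / (4 * x)) / √x) := by gcongr; linarith
      _ = 2 * ((x - 1) * (exp (-(x - 1) ^ 2 / (4 * x)) / √x)) := by ring

end

theorem incomplete_gamma_integral_estimate :
    ∃ c C : ℝ, 0 < c ∧ c ≤ C ∧ ∀ x : ℝ, 1 < x →
      c * min (x-1) (Real.sqrt x * Real.exp (-(x-1)^2/(4*x))) ≤
        (x-1) * ∫ s in Set.Ioo (0:ℝ) (2*x), s^(-(1:ℝ)/2) * Real.exp (-(x-1)^2/(2*s)) ∧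
      (x-1) * (∫ s in Set.Ioo (0:ℝ) (2*x), s^(-(1:ℝ)/2) * Real.exp (-(x-1)^2/(2*s))) ≤
        C * min (x-1) (Real.sqrt x * Real.exp (-(x-1)^2/(4*x))) := by
  refine ⟨√2 / 3, 4 * √2, by positivity, by linarith [sqrt_nonneg 2], fun x hx ↦ ?_⟩
  have hd : 0 ≤ x - 1 := by linarith
  have hlower := le_setIntegral_rpow_mul_exp_neg_sq_div hx.le
  have hupper := setIntegral_rpow_mul_exp_neg_sq_div_le (zero_lt_one.trans hx)
  have hmin_le := min_le_two_mul_sub_one_mul_exp_div_sqrt hx.le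
  have hle_min := sub_one_mul_div_sqrt_le_min hx.le (exp_pos (-(x - 1) ^ 2 / (4 * x))).le
    (exp_neg_div_le_one (sq_nonneg (x - 1)) (by linarith))
  set E := exp (-(x - 1) ^ 2 / (4 * x))
  set I := ∫ s in Set.Ioo (0 : ℝ) (2 * x), s ^ (-(1 : ℝ) / 2) * exp (-(x - 1) ^ 2 / (2 * s))
  constructor
  · calc √2 / 3 * min (x - 1) (√x * E) ≤ √2 / 3 * (2 * ((x - 1) * (E / √x))) :=
        mul_le_mul_of_nonneg_left hmin_le (by positivity)
      _ = (x - 1) * (2 * √2 / 3 * (E / √x)) := by ring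
      _ ≤ (x - 1) * I := mul_le_mul_of_nonneg_left hlower hd
  · calc (x - 1) * I ≤ (x - 1) * (4 * √2 * (E / √x)) :=
        mul_le_mul_of_nonneg_left hupper hd
      _ = 4 * √2 * ((x - 1) * (E / √x)) := by ring
      _ ≤ 4 * √2 * min (x - 1) (√x * E) := mul_le_mul_of_nonneg_left hle_min (by positivity)
end

section
/- There exist absolute constants 0 < c ≤ C such that for all x > 1, y ≥ 52 and t > 0 with xy ≤ t and y² ≥ 16·t, one has c·t²/(y²·ln²(3t/y)) ≤ ∫_{2x}^{4t²/y²} (ln s · ln(s/x))^{−1}·exp(−(x−1)²/(2s)) ds ≤ C·t²/(y²·ln²(3t/y)). (Under these hypotheses 2x < 4t²/y², so the integration interval is nonempty and ln s > 0, ln(s/x) > 0 on it.) -/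
open Real MeasureTheory

/-! The lower bound comes from the upper half `s ∈ (M / 2, M)` of the range, `M = 4 t² / y²`, where
both logarithms are at most `log M` and the exponential is at least `1 / 2`. For the upper bound the
exponential is discarded: as `log` varies more slowly than any power, `log (s / x) ^ (-2)` exceeds
its value `log (M / x) ^ (-2)` at the right endpoint by a factor of at most a constant times
`√(M / s)`, whose integral over `(0, M)` is of order `M`. -/

/-- The integrand of the estimate, as a function of the integration variable `s` for fixed `x`. -/
noncomputable def logKernel (x s : ℝ) : ℝ :=
  (log s * log (s / x))⁻¹ * exp (-(x - 1) ^ 2 / (2 * s))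

lemma log_mul_le_rpow_mul {u r ε : ℝ} (hu : 1 ≤ u) (hr : 1 ≤ r) (hε : 0 < ε) :
    log (u * r) ≤ r ^ ε * (log u + 1 / ε) := by
  have hpow : 1 ≤ r ^ ε := one_le_rpow hr hε.le
  calc log (u * r) = log u + log r := log_mul (by positivity) (by positivity)
    _ ≤ r ^ ε * log u + r ^ ε / ε :=
      add_le_add (le_mul_of_one_le_left (log_nonneg hu) hpow)
        (log_le_rpow_div (by positivity) hε)
    _ = r ^ ε * (log u + 1 / ε) := by ring

lemma sq_log_mul_le {u r : ℝ} (hu : 2 ≤ u) (hr : 1 ≤ r) :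
    log (u * r) ^ 2 ≤ 49 * √r * log u ^ 2 := by
  have hlog_two : log 2 ≤ log u := log_le_log two_pos hu
  have hlog : log (u * r) ≤ r ^ (1 / 4 : ℝ) * (7 * log u) :=
    calc log (u * r) ≤ r ^ (1 / 4 : ℝ) * (log u + 1 / (1 / 4)) :=
          log_mul_le_rpow_mul (by linarith) hr (by norm_num)
      _ ≤ r ^ (1 / 4 : ℝ) * (7 * log u) := by
          gcongr
          linarith [log_two_gt_d9]
  have hsqrt : (r ^ (1 / 4 : ℝ)) ^ 2 = √r := by
    rw [← rpow_mul_natCast (by positivity), sqrt_eq_rpow]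
    norm_num
  calc log (u * r) ^ 2 ≤ (r ^ (1 / 4 : ℝ) * (7 * log u)) ^ 2 :=
        pow_le_pow_left₀ (log_nonneg (by nlinarith)) hlog 2
    _ = 49 * (r ^ (1 / 4 : ℝ)) ^ 2 * log u ^ 2 := by ring
    _ = 49 * √r * log u ^ 2 := by rw [hsqrt]

lemma integrableOn_rpow_neg_half (M : ℝ) :
    IntegrableOn (fun s : ℝ ↦ s ^ (-(1 / 2) : ℝ)) (Set.Ioc 0 M) :=
  (intervalIntegral.intervalIntegrable_rpow' (by norm_num)).1

lemma integral_rpow_neg_half {M : ℝ} (hM : 0 ≤ M) :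
    ∫ s in Set.Ioc 0 M, s ^ (-(1 / 2) : ℝ) = 2 * √M := by
  rw [← intervalIntegral.integral_of_le hM, integral_rpow (Or.inl (by norm_num)), sqrt_eq_rpow,
    zero_rpow (by norm_num)]
  norm_num
  ring

section logKernel

variable {x s M : ℝ}

lemma measurable_logKernel (x : ℝ) : Measurable (logKernel x) := by
  unfold logKernel
  fun_prop

lemma log_div_pos_of_lt (hx : 0 < x) (hs : x < s) : 0 < log (s / x) :=
  log_pos ((one_lt_div hx).2 hs)

lemma log_div_le_log (hx : 1 ≤ x) (hs : 0 < s) : log (s / x) ≤ log s :=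
  log_le_log (by positivity) (div_le_self hs.le hx)

lemma logKernel_nonneg (hx : 1 ≤ x) (hs : x < s) : 0 ≤ logKernel x s := by
  have hlog_div := log_div_pos_of_lt (by linarith) hs
  have hlog : 0 < log s := log_pos (by linarith)
  unfold logKernel
  positivity

lemma logKernel_le_inv_sq_log (hx : 1 ≤ x) (hs : x < s) : logKernel x s ≤ (log (s / x) ^ 2)⁻¹ := by
  have hs_pos : 0 < s := by linarith
  have hlog_div := log_div_pos_of_lt (by linarith) hs
  have hlog := log_div_le_log hx hs_pos
  have hexp : exp (-(x - 1) ^ 2 / (2 * s)) ≤ 1 :=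
    exp_le_one_iff.2 (div_nonpos_of_nonpos_of_nonneg (by linarith [sq_nonneg (x - 1)])
      (by positivity))
  calc logKernel x s ≤ (log s * log (s / x))⁻¹ :=
        mul_le_of_le_one_right (inv_nonneg.2 (by nlinarith)) hexp
    _ ≤ (log (s / x) ^ 2)⁻¹ := inv_anti₀ (by positivity) (by nlinarith)

lemma logKernel_le (hx : 1 ≤ x) (hs : 2 * x < s) (hsM : s ≤ M) :
    logKernel x s ≤ 49 * √M / log (M / x) ^ 2 * s ^ (-(1 / 2) : ℝ) := by
  have hx_pos : 0 < x := by linarith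
  have hs_pos : 0 < s := by linarith
  have hlog_s := log_div_pos_of_lt hx_pos (by linarith : x < s)
  have hlog_M := log_div_pos_of_lt hx_pos (by linarith : x < M)
  have hslow : log (M / x) ^ 2 ≤ 49 * √(M / s) * log (s / x) ^ 2 := by
    have h := sq_log_mul_le ((le_div_iff₀ hx_pos).2 hs.le) ((one_le_div hs_pos).2 hsM)
    rwa [div_mul_div_comm, mul_comm x s, mul_div_mul_left _ _ hs_pos.ne'] at h
  calc logKernel x s ≤ (log (s / x) ^ 2)⁻¹ := logKernel_le_inv_sq_log hx (by linarith)
    _ ≤ 49 * √(M / s) / log (M / x) ^ 2 := by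
        rw [inv_eq_one_div, div_le_div_iff₀ (by positivity) (by positivity)]
        linarith
    _ = 49 * √M / log (M / x) ^ 2 * s ^ (-(1 / 2) : ℝ) := by
        rw [sqrt_div' _ hs_pos.le, rpow_neg hs_pos.le, ← sqrt_eq_rpow]
        ring

lemma Ioo_two_mul_subset_Ioc_zero (hx : 0 ≤ x) : Set.Ioo (2 * x) M ⊆ Set.Ioc 0 M :=
  fun _ hs ↦ ⟨by linarith [hs.1], hs.2.le⟩

lemma integrableOn_logKernel (hx : 1 ≤ x) : IntegrableOn (logKernel x) (Set.Ioo (2 * x) M) := by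
  have hdom : IntegrableOn (fun s ↦ 49 * √M / log (M / x) ^ 2 * s ^ (-(1 / 2) : ℝ))
      (Set.Ioc 0 M) := (integrableOn_rpow_neg_half M).const_mul _
  refine (hdom.mono_set (Ioo_two_mul_subset_Ioc_zero (by linarith))).mono'
    (measurable_logKernel x).aestronglyMeasurable ?_
  filter_upwards [ae_restrict_mem measurableSet_Ioo] with s hs
  rw [norm_of_nonneg (logKernel_nonneg hx (by linarith [hs.1]))]
  exact logKernel_le hx hs.1 hs.2.le

lemma integral_logKernel_le (hx : 1 ≤ x) (hM : 0 ≤ M) :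
    ∫ s in Set.Ioo (2 * x) M, logKernel x s ≤ 98 * M / log (M / x) ^ 2 := by
  set K := 49 * √M / log (M / x) ^ 2
  have hdom : IntegrableOn (fun s ↦ K * s ^ (-(1 / 2) : ℝ)) (Set.Ioc 0 M) :=
    (integrableOn_rpow_neg_half M).const_mul K
  have hsub : Set.Ioo (2 * x) M ⊆ Set.Ioc 0 M := Ioo_two_mul_subset_Ioc_zero (by linarith)
  have hdom_nonneg : ∀ᵐ s ∂volume.restrict (Set.Ioc 0 M), 0 ≤ K * s ^ (-(1 / 2) : ℝ) := by
    filter_upwards [ae_restrict_mem measurableSet_Ioc] with s hs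
    exact mul_nonneg (by positivity) (rpow_nonneg hs.1.le _)
  calc ∫ s in Set.Ioo (2 * x) M, logKernel x s
      ≤ ∫ s in Set.Ioo (2 * x) M, K * s ^ (-(1 / 2) : ℝ) :=
        setIntegral_mono_on (integrableOn_logKernel hx) (hdom.mono_set hsub) measurableSet_Ioo
          fun _ hs ↦ logKernel_le hx hs.1 hs.2.le
    _ ≤ ∫ s in Set.Ioc 0 M, K * s ^ (-(1 / 2) : ℝ) :=
        setIntegral_mono_set hdom hdom_nonneg hsub.eventuallyLE
    _ = K * (2 * √M) := by rw [integral_const_mul, integral_rpow_neg_half hM]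
    _ = 98 * √M ^ 2 / log (M / x) ^ 2 := by ring
    _ = 98 * M / log (M / x) ^ 2 := by rw [sq_sqrt hM]

lemma inv_le_logKernel (hx : 1 ≤ x) (hxs : x < s) (hsq : (x - 1) ^ 2 ≤ s) (hsM : s ≤ M) :
    (2 * log M ^ 2)⁻¹ ≤ logKernel x s := by
  have hs_pos : 0 < s := by linarith
  have hlog_div := log_div_pos_of_lt (by linarith) hxs
  have hlog := log_div_le_log hx hs_pos
  have hlog_M : log s ≤ log M := log_le_log hs_pos hsM
  have hexp : 1 / 2 ≤ exp (-(x - 1) ^ 2 / (2 * s)) := by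
    have hexponent : -(1 / 2) ≤ -(x - 1) ^ 2 / (2 * s) := by
      rw [le_div_iff₀ (by positivity)]
      linarith
    linarith [add_one_le_exp (-(x - 1) ^ 2 / (2 * s))]
  have hinv : (log M ^ 2)⁻¹ ≤ (log s * log (s / x))⁻¹ :=
    inv_anti₀ (by nlinarith) (by nlinarith)
  calc (2 * log M ^ 2)⁻¹ = (log M ^ 2)⁻¹ * (1 / 2) := by ring
    _ ≤ logKernel x s := mul_le_mul hinv hexp (by norm_num) (inv_nonneg.2 (by nlinarith))

lemma le_integral_logKernel (hx : 1 ≤ x) (hxM : 4 * x ≤ M) (hsq : 2 * (x - 1) ^ 2 ≤ M) :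
    M / (4 * log M ^ 2) ≤ ∫ s in Set.Ioo (2 * x) M, logKernel x s := by
  have hsub : Set.Ioo (M / 2) M ⊆ Set.Ioo (2 * x) M := Set.Ioo_subset_Ioo_left (by linarith)
  have hint : IntegrableOn (logKernel x) (Set.Ioo (2 * x) M) := integrableOn_logKernel hx
  have hnonneg : ∀ᵐ s ∂volume.restrict (Set.Ioo (2 * x) M), 0 ≤ logKernel x s := by
    filter_upwards [ae_restrict_mem measurableSet_Ioo] with s hs
    exact logKernel_nonneg hx (by linarith [hs.1])
  calc M / (4 * log M ^ 2) = (2 * log M ^ 2)⁻¹ * volume.real (Set.Ioo (M / 2) M) := by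
        rw [volume_real_Ioo_of_le (by linarith)]
        ring
    _ ≤ ∫ s in Set.Ioo (M / 2) M, logKernel x s :=
        setIntegral_ge_of_const_le_real measurableSet_Ioo measure_Ioo_lt_top.ne
          (fun _ hs ↦ inv_le_logKernel hx (by linarith [hs.1]) (by linarith [hs.1]) hs.2.le)
          (hint.mono_set hsub)
    _ ≤ ∫ s in Set.Ioo (2 * x) M, logKernel x s :=
        setIntegral_mono_set hint hnonneg hsub.eventuallyLE

end logKernel

lemma le_integral_logKernel_four_mul_sq {x T : ℝ} (hx : 1 ≤ x) (hxT : x ≤ T) :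
    1 / 4 * (T ^ 2 / log (3 * T) ^ 2) ≤ ∫ s in Set.Ioo (2 * x) (4 * T ^ 2), logKernel x s := by
  have hlog_pos : 0 < log (4 * T ^ 2) := log_pos (by nlinarith)
  have hlog : log (4 * T ^ 2) ≤ 2 * log (3 * T) :=
    calc log (4 * T ^ 2) ≤ log ((3 * T) ^ 2) := log_le_log (by nlinarith) (by nlinarith)
      _ = 2 * log (3 * T) := by rw [log_pow, Nat.cast_two]
  calc 1 / 4 * (T ^ 2 / log (3 * T) ^ 2) = 4 * T ^ 2 / (4 * (2 * log (3 * T)) ^ 2) := by ring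
    _ ≤ 4 * T ^ 2 / (4 * log (4 * T ^ 2) ^ 2) := by gcongr
    _ ≤ ∫ s in Set.Ioo (2 * x) (4 * T ^ 2), logKernel x s :=
        le_integral_logKernel hx (by nlinarith) (by nlinarith)

lemma integral_logKernel_four_mul_sq_le {x T : ℝ} (hx : 1 ≤ x) (hxT : x ≤ T) :
    ∫ s in Set.Ioo (2 * x) (4 * T ^ 2), logKernel x s ≤ 392 * (T ^ 2 / log (3 * T) ^ 2) := by
  have hlog_pos : 0 < log (3 * T) := log_pos (by linarith)
  have hlog : log (3 * T) ≤ log (4 * T ^ 2 / x) :=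
    log_le_log (by linarith) ((le_div_iff₀ (by linarith)).2 (by nlinarith))
  calc ∫ s in Set.Ioo (2 * x) (4 * T ^ 2), logKernel x s
      ≤ 98 * (4 * T ^ 2) / log (4 * T ^ 2 / x) ^ 2 := integral_logKernel_le hx (by positivity)
    _ ≤ 98 * (4 * T ^ 2) / log (3 * T) ^ 2 := by gcongr
    _ = 392 * (T ^ 2 / log (3 * T) ^ 2) := by ring

theorem log_integral_estimate_general {x y t : ℝ} (hx : 1 ≤ x) (hy : 0 < y) (hxy : x * y ≤ t) :
    1 / 4 * (t ^ 2 / (y ^ 2 * log (3 * t / y) ^ 2)) ≤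
        ∫ s in Set.Ioo (2 * x) (4 * t ^ 2 / y ^ 2),
          (log s * log (s / x))⁻¹ * exp (-(x - 1) ^ 2 / (2 * s)) ∧
      ∫ s in Set.Ioo (2 * x) (4 * t ^ 2 / y ^ 2),
          (log s * log (s / x))⁻¹ * exp (-(x - 1) ^ 2 / (2 * s)) ≤
        392 * (t ^ 2 / (y ^ 2 * log (3 * t / y) ^ 2)) := by
  have hxT : x ≤ t / y := (le_div_iff₀ hy).2 hxy
  rw [← div_div, mul_div_assoc 3, mul_div_assoc 4, ← div_pow]
  exact ⟨le_integral_logKernel_four_mul_sq hx hxT, integral_logKernel_four_mul_sq_le hx hxT⟩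

theorem log_integral_estimate :
    ∃ c C : ℝ, 0 < c ∧ c ≤ C ∧ ∀ x y t : ℝ, 1 < x → 52 ≤ y → 0 < t →
      x*y ≤ t → 16*t ≤ y^2 →
      c * (t^2/(y^2 * (Real.log (3*t/y))^2)) ≤
        (∫ s in Set.Ioo (2*x) (4*t^2/y^2),
          (Real.log s * Real.log (s/x))⁻¹ * Real.exp (-(x-1)^2/(2*s))) ∧
      (∫ s in Set.Ioo (2*x) (4*t^2/y^2),
          (Real.log s * Real.log (s/x))⁻¹ * Real.exp (-(x-1)^2/(2*s))) ≤
        C * (t^2/(y^2 * (Real.log (3*t/y))^2)) :=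
  ⟨1 / 4, 392, by norm_num, by norm_num, fun _ _ _ hx hy _ hxy _ ↦
    log_integral_estimate_general hx.le (by linarith) hxy⟩
end
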